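/- arXiv:2505.21159 — 2 statements merged into one kernel-verified Lean document; each statement's English description precedes it below -/
import Mathlib

section
/- Let s₁ = [i₁, j₁] be a segment and s₂ = [i₂, j₂] ∈ c_{s₁}^+ (so i₁ ≤ i₂ < j₁ ≤ j₂ < h + i₁). Then there exists a unique MY path p ∈ ℙ_{s₁} with c_p^+ = {s₂}; moreover, for this p, c_p^− is the set of those segments among [j₁, j₂] and [i₂, h + i₁] that are proper (i.e. [j₁, j₂] belongs to c_p^− iff j₁ < j₂, and [i₂, h + i₁] belongs to c_p^− iff i₁ < i₂). -/
/-!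
A `±1` path with no valley strictly inside an interval is a single hill `k ↦ c - |k - m|` there:
once it has gone down it cannot go up again. A path whose only valley is at `K` is therefore a hill
on `[0, K]` followed by a hill on `[K, h]`. Each hill is determined by its two end values, which
gives uniqueness; conversely, replacing both halves of any path with a valley at `K` by hills with
the same end values gives existence. The peaks are the summits of the two hills that lie strictly
between `0` and `h`. Since `2 s_{p,k} = [p k - k, p k + k]`, the first coordinate is constant along
an ascent and the second along a descent, so the summit of a hill on `[a, b]` has the first
coordinate of `s_{p,a}` and the second coordinate of `s_{p,b}`.
-/

namespace SnakePaper

/-- `zle a b` : `b - a` is a nonnegative integer (the integrality order `a ≤ b`). -/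
def zle (a b : ℚ) : Prop := ∃ n : ℤ, 0 ≤ n ∧ b - a = (n : ℚ)

/-- `zlt a b` : `b - a` is a positive integer (the integrality order `a < b`). -/
def zlt (a b : ℚ) : Prop := ∃ n : ℤ, 0 < n ∧ b - a = (n : ℚ)

/-- `s = (i, j)` is an `N`-segment: `2i ∈ ℤ`, `j - i ∈ ℤ` and `0 ≤ j - i ≤ N + 1`. -/
def IsSeg (N : ℕ) (s : ℚ × ℚ) : Prop :=
  (∃ m : ℤ, 2 * s.1 = (m : ℚ)) ∧
  ∃ n : ℤ, s.2 - s.1 = (n : ℚ) ∧ 0 ≤ n ∧ (n : ℚ) ≤ (N : ℚ) + 1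

/-- `s = (i, j)` is a proper `N`-segment: `2i ∈ ℤ`, `j - i ∈ ℤ` and `0 < j - i < N + 1`. -/
def IsProperSeg (N : ℕ) (s : ℚ × ℚ) : Prop :=
  (∃ m : ℤ, 2 * s.1 = (m : ℚ)) ∧
  ∃ n : ℤ, s.2 - s.1 = (n : ℚ) ∧ 0 < n ∧ (n : ℚ) < (N : ℚ) + 1

/-- `supp [i,j] = j - i`. -/
def supp (s : ℚ × ℚ) : ℚ := s.2 - s.1

/-- `spar [i,j] = i + j`. -/
def spar (s : ℚ × ℚ) : ℚ := s.1 + s.2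

/-- Right dual `s* = [j - h, i]`, where `h = N + 1`. -/
def dual (N : ℕ) (s : ℚ × ℚ) : ℚ × ℚ := (s.2 - ((N : ℚ) + 1), s.1)

/-- Left dual `*s = [j, i + h]`, where `h = N + 1`. -/
def ldual (N : ℕ) (s : ℚ × ℚ) : ℚ × ℚ := (s.2, s.1 + ((N : ℚ) + 1))

/-- `1 + s = [i + 1, j + 1]`. -/
def shift (s : ℚ × ℚ) : ℚ × ℚ := (s.1 + 1, s.2 + 1)

/-- `Covers N s₂ s₁` : `s₂ ▷ s₁`, i.e. `i₁ < i₂ ≤ j₁ < j₂ ≤ h + i₁` (integrality order). -/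
def Covers (N : ℕ) (s₂ s₁ : ℚ × ℚ) : Prop :=
  zlt s₁.1 s₂.1 ∧ zle s₂.1 s₁.2 ∧ zlt s₁.2 s₂.2 ∧ zle s₂.2 (((N : ℚ) + 1) + s₁.1)

/-- For `s₂ ▷ s₁`, the intersection `s₁ ∩ s₂ = [i₂, j₁]`. -/
def seginter (s₁ s₂ : ℚ × ℚ) : ℚ × ℚ := (s₂.1, s₁.2)

/-- For `s₂ ▷ s₁`, the union `s₁ ∪ s₂ = [i₁, j₂]`. -/
def segunion (s₁ s₂ : ℚ × ℚ) : ℚ × ℚ := (s₁.1, s₂.2)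

/-- `(s 0, …, s (l-1))` is a ladder of length `l`. -/
def IsLadder (N l : ℕ) (s : ℕ → ℚ × ℚ) : Prop :=
  (∀ k, k < l → IsSeg N (s k)) ∧
  ∀ k m, k < m → m < l → zlt (s k).1 (s m).1 ∧ zlt (s k).2 (s m).2

/-- `(s₁, s₂)` is a ladder of length 2. -/
def IsLadder2 (N : ℕ) (s₁ s₂ : ℚ × ℚ) : Prop :=
  IsSeg N s₁ ∧ IsSeg N s₂ ∧ zlt s₁.1 s₂.1 ∧ zlt s₁.2 s₂.2

/-- Componentwise covering of two length-`l` tuples: `𝐬 ▷ 𝐬'`. -/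
def CoversMulti (N l : ℕ) (s s' : ℕ → ℚ × ℚ) : Prop :=
  ∀ m, m < l → Covers N (s m) (s' m)

/-- `𝐬 ▷_p 𝐬'` for length-`l` tuples: `𝐬(0, l−k) ▷ 𝐬'(k, l)` for all `0 ≤ k ≤ p`. -/
def CoversP (N l p : ℕ) (s s' : ℕ → ℚ × ℚ) : Prop :=
  ∀ k, k ≤ p → ∀ m, m + k < l → Covers N (s m) (s' (m + k))

/-- `p` is an MY path for the segment `s` (`h = N + 1`; only values on `{0, …, h}` matter). -/
def IsMYPath (N : ℕ) (s : ℚ × ℚ) (p : ℕ → ℤ) : Prop :=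
  (∀ k, k < N + 1 → p (k + 1) = p k + 1 ∨ p (k + 1) = p k - 1) ∧
  (p 0 : ℚ) = 2 * s.2 ∧ (p (N + 1) : ℚ) = ((N : ℚ) + 1) + 2 * s.1

/-- `s_{p,k} = [(p(k) - k)/2, (p(k) + k)/2]`. -/
def pathSeg (p : ℕ → ℤ) (k : ℕ) : ℚ × ℚ :=
  (((p k : ℚ) - (k : ℚ)) / 2, ((p k : ℚ) + (k : ℚ)) / 2)

/-- `c_p^-` : segments at the local maxima of `p` in `[1, N]`. -/
def cMinus (N : ℕ) (p : ℕ → ℤ) : Set (ℚ × ℚ) :=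
  {t | ∃ k, 1 ≤ k ∧ k ≤ N ∧ t = pathSeg p k ∧ p (k - 1) = p k - 1 ∧ p (k + 1) = p k - 1}

/-- `c_p^+` : segments at the local minima of `p` in `[1, N]`. -/
def cPlus (N : ℕ) (p : ℕ → ℤ) : Set (ℚ × ℚ) :=
  {t | ∃ k, 1 ≤ k ∧ k ≤ N ∧ t = pathSeg p k ∧ p (k - 1) = p k + 1 ∧ p (k + 1) = p k + 1}

/-- `c_s^- = ⋃_{p ∈ ℙ_s} c_p^-`. -/
def cSegMinus (N : ℕ) (s : ℚ × ℚ) : Set (ℚ × ℚ) :=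
  {t | ∃ p, IsMYPath N s p ∧ t ∈ cMinus N p}

/-- `c_s^+ = ⋃_{p ∈ ℙ_s} c_p^+`. -/
def cSegPlus (N : ℕ) (s : ℚ × ℚ) : Set (ℚ × ℚ) :=
  {t | ∃ p, IsMYPath N s p ∧ t ∈ cPlus N p}

/-- `(p 0, …, p (l-1)) ∈ ℙ_𝐬` for the length-`l` tuple `𝐬`. -/
def IsPathTuple (N l : ℕ) (s : ℕ → ℚ × ℚ) (p : ℕ → ℕ → ℤ) : Prop :=
  (∀ m, m < l → IsMYPath N (s m) (p m)) ∧
  ∀ m n, m < n → n < l → ∀ k, k ≤ N + 1 → p m k < p n k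

/-- The highest path `p_s(k) = spar(s) + |k - supp(s)|` (rational-valued formula). -/
def highestPath (s : ℚ × ℚ) (k : ℚ) : ℚ := spar s + |k - supp s|

/-- The lowest path `p_s^*(k) = spar(s) + h - |k - (h - supp(s))|` (rational-valued formula). -/
def lowestPath (N : ℕ) (s : ℚ × ℚ) (k : ℚ) : ℚ :=
  spar s + ((N : ℚ) + 1) - |k - (((N : ℚ) + 1) - supp s)|

/-- `Small N s₁' t` : `spar(t) ≤ spar(*s₁') - |supp(t) - supp(*s₁')|` (integrality order). -/
def Small (N : ℕ) (s₁' t : ℚ × ℚ) : Prop :=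
  zle (spar t) (spar (ldual N s₁') - |supp t - supp (ldual N s₁')|)

/-- `(s₁, s₂)` and `(s₁', s₂')` are ladders and `(s₁, s₂) ▷₁ (s₁', s₂')`. -/
def Pair1Cover (N : ℕ) (s₁ s₁' s₂ s₂' : ℚ × ℚ) : Prop :=
  IsLadder2 N s₁ s₂ ∧ IsLadder2 N s₁' s₂' ∧
  Covers N s₁ s₁' ∧ Covers N s₂ s₂' ∧ Covers N s₁ s₂'

/-- `p` moves by unit steps, up or down, on the integer interval `[a, b]`. -/
def IsStepPathOn (p : ℕ → ℤ) (a b : ℕ) : Prop :=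
  ∀ k, a ≤ k → k < b → p (k + 1) = p k + 1 ∨ p (k + 1) = p k - 1

/-- `k` is a local minimum of the `±1` path `p`, as in `cPlus`. Because `0 - 1 = 0` in `ℕ`, the
index `0` is never a valley. -/
def IsValley (p : ℕ → ℤ) (k : ℕ) : Prop :=
  p (k - 1) = p k + 1 ∧ p (k + 1) = p k + 1

/-- `k` is a local maximum of the `±1` path `p`, as in `cMinus`. Because `0 - 1 = 0` in `ℕ`, the
index `0` is never a peak. -/
def IsPeak (p : ℕ → ℤ) (k : ℕ) : Prop :=
  p (k - 1) = p k - 1 ∧ p (k + 1) = p k - 1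

/-- On `[a, b]` the path `p` is a hill with summit `m`: it ascends from `a` to `m` and descends from
`m` to `b`. Either slope may be empty. -/
structure IsHillOn (p : ℕ → ℤ) (a m b : ℕ) : Prop where
  left_le : a ≤ m
  le_right : m ≤ b
  eq_sub_abs : ∀ k, a ≤ k → k ≤ b → p k = p m - |(k : ℤ) - m|

/-- On `[a, b]` the path `p` consists of two hills, with summits `m` and `n`, which meet in a valley
at `K`: the inner slopes are nonempty, but the outer ones may be empty. -/
structure IsTwoHillsOn (p : ℕ → ℤ) (a m K n b : ℕ) : Prop where
  left_hill : IsHillOn p a m K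
  right_hill : IsHillOn p K n b
  left_summit_lt : m < K
  lt_right_summit : K < n

section Paths

variable {p q : ℕ → ℤ} {a b c k m n K : ℕ}

theorem IsPeak.not_isValley (h : IsPeak p k) : ¬ IsValley p k := by
  rintro ⟨hv, -⟩
  have := h.1
  omega

theorem IsStepPathOn.mono (h : IsStepPathOn p a b) {a' b' : ℕ} (ha : a ≤ a') (hb : b' ≤ b) :
    IsStepPathOn p a' b' :=
  fun k hak hkb => h k (ha.trans hak) (hkb.trans_le hb)

theorem IsStepPathOn.append (h : IsStepPathOn p a b) (h' : IsStepPathOn p b c) :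
    IsStepPathOn p a c :=
  fun k hak hkc => (lt_or_ge k b).elim (h k hak) fun hbk => h' k hbk hkc

/-- The witness is the summit of the hill with the same end values as the path: `m - a` is the number
of up-steps. -/
theorem IsStepPathOn.exists_summit (h : IsStepPathOn p a b) (hab : a ≤ b) :
    ∃ m, a ≤ m ∧ m ≤ b ∧ p a + (m - a) = p b + (b - m) := by
  induction b, hab using Nat.le_induction with
  | base => exact ⟨a, le_rfl, le_rfl, rfl⟩
  | succ b hab ih =>
    obtain ⟨m, ham, hmb, hm⟩ := ih (h.mono le_rfl b.le_succ)
    rcases h b hab b.lt_succ_self with hup | hdown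
    · exact ⟨m + 1, by omega, by omega, by push_cast; omega⟩
    · exact ⟨m, ham, by omega, by push_cast; omega⟩

theorem IsHillOn.ascent (h : IsHillOn p a m b) (hak : a ≤ k) (hkm : k ≤ m) :
    p k = p a + (k - a) := by
  have hk := h.eq_sub_abs k hak (hkm.trans h.le_right)
  have ha := h.eq_sub_abs a le_rfl (h.left_le.trans h.le_right)
  rw [abs_of_nonpos (by omega)] at hk ha
  omega

theorem IsHillOn.descent (h : IsHillOn p a m b) (hmk : m ≤ k) (hkb : k ≤ b) :
    p k = p b + (b - k) := by
  have hk := h.eq_sub_abs k (h.left_le.trans hmk) hkb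
  have hb := h.eq_sub_abs b (h.left_le.trans h.le_right) le_rfl
  rw [abs_of_nonneg (by have := h.le_right; omega)] at hk hb
  omega

theorem IsHillOn.of_ascent_of_descent (ham : a ≤ m) (hmb : m ≤ b)
    (hup : ∀ k, a ≤ k → k ≤ m → p k = p a + (k - a))
    (hdown : ∀ k, m ≤ k → k ≤ b → p k = p b + (b - k)) : IsHillOn p a m b where
  left_le := ham
  le_right := hmb
  eq_sub_abs k hak hkb := by
    rcases le_total k m with hkm | hmk
    · rw [hup k hak hkm, hup m ham le_rfl, abs_of_nonpos (by omega)]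
      ring
    · rw [hdown k hmk hkb, hdown m le_rfl hmb, abs_of_nonneg (by omega)]
      ring

theorem IsHillOn.isStepPathOn (h : IsHillOn p a m b) : IsStepPathOn p a b := by
  intro k hak hkb
  rcases lt_or_ge k m with hkm | hmk
  · have hk := h.ascent hak hkm.le
    have hsucc := h.ascent (by omega) (show k + 1 ≤ m by omega)
    omega
  · have hk := h.descent hmk hkb.le
    have hsucc := h.descent (by omega) (show k + 1 ≤ b by omega)
    omega

theorem IsHillOn.isPeak_iff (h : IsHillOn p a m b) (hak : a < k) (hkb : k < b) :
    IsPeak p k ↔ k = m := by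
  have hpred := h.eq_sub_abs (k - 1) (by omega) (by omega)
  have hk := h.eq_sub_abs k hak.le hkb.le
  have hsucc := h.eq_sub_abs (k + 1) (by omega) (by omega)
  unfold IsPeak
  grind

theorem IsHillOn.not_isValley (h : IsHillOn p a m b) (hak : a < k) (hkb : k < b) :
    ¬ IsValley p k := by
  have hpred := h.eq_sub_abs (k - 1) (by omega) (by omega)
  have hk := h.eq_sub_abs k hak.le hkb.le
  have hsucc := h.eq_sub_abs (k + 1) (by omega) (by omega)
  unfold IsValley
  grind

theorem IsHillOn.eq_of_endpoints (hp : IsHillOn p a m b) (hq : IsHillOn q a n b)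
    (ha : p a = q a) (hb : p b = q b) (hak : a ≤ k) (hkb : k ≤ b) : p k = q k := by
  have summit_p : p a + (m - a) = p b + (b - m) :=
    (hp.ascent hp.left_le le_rfl).symm.trans (hp.descent le_rfl hp.le_right)
  have summit_q : q a + (n - a) = q b + (b - n) :=
    (hq.ascent hq.left_le le_rfl).symm.trans (hq.descent le_rfl hq.le_right)
  obtain rfl : m = n := by omega
  rcases le_total k m with hkm | hmk
  · rw [hp.ascent hak hkm, hq.ascent hak hkm, ha]
  · rw [hp.descent hmk hkb, hq.descent hmk hkb, hb]

theorem IsStepPathOn.exists_isHillOn (h : IsStepPathOn p a b) (hab : a ≤ b)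
    (hv : ∀ k, a < k → k < b → ¬ IsValley p k) : ∃ m, IsHillOn p a m b := by
  induction b, hab using Nat.le_induction with
  | base => exact ⟨a, .of_ascent_of_descent le_rfl le_rfl (by grind) (by grind)⟩
  | succ b hab ih =>
    obtain ⟨m, hm⟩ := ih (h.mono le_rfl b.le_succ) fun k hak hkb =>
      hv k hak (hkb.trans b.lt_succ_self)
    have hmb := hm.le_right
    rcases h b hab b.lt_succ_self with hup | hdown
    · obtain rfl : m = b := by
        by_contra hne
        have hpred := hm.descent (k := b - 1) (by omega) (by omega)
        exact hv b (by have := hm.left_le; omega) b.lt_succ_self ⟨by omega, hup⟩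
      refine ⟨m + 1, .of_ascent_of_descent (by omega) le_rfl (fun k hak hkm => ?_) (by grind)⟩
      rcases Nat.le_add_one_iff.mp hkm with hkm | rfl
      · exact hm.ascent hak hkm
      · have := hm.ascent hab le_rfl
        push_cast
        omega
    · refine ⟨m, .of_ascent_of_descent hm.left_le (by omega) (fun k => hm.ascent)
        fun k hmk hkb => ?_⟩
      rcases Nat.le_add_one_iff.mp hkb with hkb | rfl
      · have := hm.descent hmk hkb
        push_cast
        omega
      · simp

theorem IsTwoHillsOn.isStepPathOn (h : IsTwoHillsOn p a m K n b) : IsStepPathOn p a b :=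
  h.left_hill.isStepPathOn.append h.right_hill.isStepPathOn

theorem IsTwoHillsOn.isValley_valley (h : IsTwoHillsOn p a m K n b) : IsValley p K := by
  have hm := h.left_summit_lt
  have hpred := h.left_hill.descent (show m ≤ K - 1 by omega) (by omega)
  have hsucc := h.right_hill.ascent (show K ≤ K + 1 by omega) h.lt_right_summit
  exact ⟨by omega, by omega⟩

theorem IsTwoHillsOn.isValley_iff (h : IsTwoHillsOn p a m K n b) (hak : a < k) (hkb : k < b) :
    IsValley p k ↔ k = K := by
  refine ⟨fun hk => ?_, fun hk => hk ▸ h.isValley_valley⟩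
  rcases lt_trichotomy k K with hlt | heq | hgt
  · exact (h.left_hill.not_isValley hak hlt hk).elim
  · exact heq
  · exact (h.right_hill.not_isValley hgt hkb hk).elim

theorem IsTwoHillsOn.isPeak_iff (h : IsTwoHillsOn p a m K n b) (hak : a < k) (hkb : k < b) :
    IsPeak p k ↔ k = m ∨ k = n := by
  have hm := h.left_summit_lt
  have hn := h.lt_right_summit
  rcases lt_trichotomy k K with hlt | rfl | hgt
  · rw [h.left_hill.isPeak_iff hak hlt]
    omega
  · exact iff_of_false (fun hk => hk.not_isValley h.isValley_valley) (by omega)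
  · rw [h.right_hill.isPeak_iff hgt hkb]
    omega

theorem IsStepPathOn.exists_isTwoHillsOn (h : IsStepPathOn p a b) (haK : a < K) (hKb : K < b)
    (hv : ∀ k, a < k → k < b → (IsValley p k ↔ k = K)) : ∃ m n, IsTwoHillsOn p a m K n b := by
  obtain ⟨hpred, hsucc⟩ := (hv K haK hKb).mpr rfl
  obtain ⟨m, hm⟩ := (h.mono le_rfl hKb.le).exists_isHillOn haK.le
    fun k hak hkK hk => hkK.ne ((hv k hak (hkK.trans hKb)).mp hk)
  obtain ⟨n, hn⟩ := (h.mono haK.le le_rfl).exists_isHillOn hKb.le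
    fun k hKk hkb hk => hKk.ne' ((hv k (haK.trans hKk) hkb).mp hk)
  refine ⟨m, n, hm, hn, hm.le_right.lt_of_ne ?_, hn.left_le.lt_of_ne ?_⟩
  · rintro rfl
    have hasc := hm.ascent (show a ≤ m - 1 by omega) (by omega)
    have hasc' := hm.ascent hm.left_le le_rfl
    omega
  · rintro rfl
    have hdesc := hn.descent (show K ≤ K + 1 by omega) hKb
    have hdesc' := hn.descent le_rfl hKb.le
    push_cast at hdesc
    omega

theorem IsTwoHillsOn.eq_of_endpoints_of_valley {m' n' : ℕ} (hp : IsTwoHillsOn p a m K n b)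
    (hq : IsTwoHillsOn q a m' K n' b) (ha : p a = q a) (hK : p K = q K) (hb : p b = q b)
    (hak : a ≤ k) (hkb : k ≤ b) : p k = q k := by
  rcases le_total k K with hkK | hKk
  · exact hp.left_hill.eq_of_endpoints hq.left_hill ha hK hak hkK
  · exact hp.right_hill.eq_of_endpoints hq.right_hill hK hb hKk hkb

/-- For `m < K < n`, the path with summits `m` and `n` and value `v` at the valley `K`. Both cones
vanish at `K`; the maximum is the cone over `m` before `K` and the cone over `n` after `K`. -/
def twoHills (v : ℤ) (m K n k : ℕ) : ℤ :=
  v + max (K - m - |(k : ℤ) - m|) (n - K - |(k : ℤ) - n|)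

theorem isTwoHillsOn_twoHills (v : ℤ) (ham : a ≤ m) (hmK : m < K) (hKn : K < n) (hnb : n ≤ b) :
    IsTwoHillsOn (twoHills v m K n) a m K n b where
  left_hill := ⟨ham, hmK.le, fun k _ _ => by
    simp only [twoHills, abs_eq_max_neg]; omega⟩
  right_hill := ⟨hKn.le, hnb, fun k _ _ => by
    simp only [twoHills, abs_eq_max_neg]; omega⟩
  left_summit_lt := hmK
  lt_right_summit := hKn

theorem IsStepPathOn.exists_isTwoHillsOn_eq_endpoints_eq_valley (h : IsStepPathOn q a b)
    (haK : a < K) (hKb : K < b) (hv : IsValley q K) :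
    ∃ p m n, IsTwoHillsOn p a m K n b ∧ p a = q a ∧ p K = q K ∧ p b = q b := by
  obtain ⟨hpred, hsucc⟩ := hv
  obtain ⟨m, ham, hmK, hm⟩ := (h.mono le_rfl (by omega)).exists_summit (show a ≤ K - 1 by omega)
  obtain ⟨n, hKn, hnb, hn⟩ := (h.mono (by omega) le_rfl).exists_summit (show K + 1 ≤ b from hKb)
  push_cast at hn
  refine ⟨twoHills (q K) m K n, m, n,
    isTwoHillsOn_twoHills _ ham (by omega) (by omega) hnb, ?_, ?_, ?_⟩ <;>
  · simp only [twoHills, abs_eq_max_neg]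
    omega

end Paths

section Segments

variable {N : ℕ} {s t : ℚ × ℚ} {p q : ℕ → ℤ} {a b k l m n K : ℕ}

theorem zlt_iff_pos_of_sub_eq {x y : ℚ} {d : ℤ} (h : y - x = d) : zlt x y ↔ 0 < d := by
  refine ⟨?_, fun hd => ⟨d, hd, h⟩⟩
  rintro ⟨e, he, hxy⟩
  rwa [Int.cast_injective (h.symm.trans hxy)]

theorem pathSeg_eq_pathSeg_iff : pathSeg p k = pathSeg q l ↔ k = l ∧ p k = q l := by
  refine ⟨fun h => ?_, fun ⟨hkl, hpq⟩ => by subst hkl; simp only [pathSeg, hpq]⟩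
  have hfst : ((p k : ℚ) - k) / 2 = (q l - l) / 2 := congrArg Prod.fst h
  have hsnd : ((p k : ℚ) + k) / 2 = (q l + l) / 2 := congrArg Prod.snd h
  constructor
  · exact_mod_cast (by linarith : (k : ℚ) = l)
  · exact_mod_cast (by linarith : (p k : ℚ) = q l)

theorem IsHillOn.pathSeg_fst_eq (h : IsHillOn p a m b) : (pathSeg p m).1 = (pathSeg p a).1 := by
  have hm : (p m : ℚ) = p a + (m - a) := by exact_mod_cast h.ascent h.left_le le_rfl
  simp only [pathSeg, hm]
  ring

theorem IsHillOn.pathSeg_snd_eq (h : IsHillOn p a m b) : (pathSeg p m).2 = (pathSeg p b).2 := by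
  have hm : (p m : ℚ) = p b + (b - m) := by exact_mod_cast h.descent le_rfl h.le_right
  simp only [pathSeg, hm]
  ring

theorem IsHillOn.pathSeg_snd_sub_snd (h : IsHillOn p a m b) :
    (pathSeg p b).2 - (pathSeg p a).2 = ((m - a : ℤ) : ℚ) := by
  have hm : (p m : ℚ) = p a + (m - a) := by exact_mod_cast h.ascent h.left_le le_rfl
  rw [← h.pathSeg_snd_eq]
  simp only [pathSeg, hm]
  push_cast
  ring

theorem IsHillOn.pathSeg_fst_sub_fst (h : IsHillOn p a m b) :
    (pathSeg p a).1 - (pathSeg p b).1 = ((b - m : ℤ) : ℚ) := by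
  have hm : (p m : ℚ) = p b + (b - m) := by exact_mod_cast h.descent le_rfl h.le_right
  rw [← h.pathSeg_fst_eq]
  simp only [pathSeg, hm]
  push_cast
  ring

theorem mem_cPlus_iff :
    t ∈ cPlus N p ↔ ∃ k, 0 < k ∧ k < N + 1 ∧ t = pathSeg p k ∧ IsValley p k := by
  simp only [cPlus, IsValley, Set.mem_ofPred_eq, Nat.lt_add_one_iff, Order.one_le_iff_pos]

theorem mem_cMinus_iff :
    t ∈ cMinus N p ↔ ∃ k, 0 < k ∧ k < N + 1 ∧ t = pathSeg p k ∧ IsPeak p k := by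
  simp only [cMinus, IsPeak, Set.mem_ofPred_eq, Nat.lt_add_one_iff, Order.one_le_iff_pos]

theorem IsMYPath.pathSeg_zero (h : IsMYPath N s p) : pathSeg p 0 = (s.2, s.2) := by
  simp [pathSeg, h.2.1]

theorem IsMYPath.pathSeg_last (h : IsMYPath N s p) :
    pathSeg p (N + 1) = (s.1, ((N : ℚ) + 1) + s.1) := by
  simp only [pathSeg, h.2.2]
  ext <;> push_cast <;> ring

theorem IsMYPath.isStepPathOn (h : IsMYPath N s p) : IsStepPathOn p 0 (N + 1) :=
  fun k _ => h.1 k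

theorem IsMYPath.of_eq_endpoints (hq : IsMYPath N s q) (hp : IsStepPathOn p 0 (N + 1))
    (h0 : p 0 = q 0) (hlast : p (N + 1) = q (N + 1)) : IsMYPath N s p :=
  ⟨fun k => hp k k.zero_le, h0 ▸ hq.2.1, hlast ▸ hq.2.2⟩

theorem IsMYPath.eq_endpoints (hp : IsMYPath N s p) (hq : IsMYPath N s q) :
    p 0 = q 0 ∧ p (N + 1) = q (N + 1) :=
  ⟨by exact_mod_cast hp.2.1.trans hq.2.1.symm, by exact_mod_cast hp.2.2.trans hq.2.2.symm⟩

theorem IsTwoHillsOn.cPlus_eq_singleton (h : IsTwoHillsOn p 0 m K n (N + 1)) :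
    cPlus N p = {pathSeg p K} := by
  have hK : 0 < K := h.left_summit_lt.pos
  have hKN : K < N + 1 := h.lt_right_summit.trans_le h.right_hill.le_right
  ext t
  rw [mem_cPlus_iff, Set.mem_singleton_iff]
  constructor
  · rintro ⟨k, hk, hkN, rfl, hv⟩
    rw [(h.isValley_iff hk hkN).mp hv]
  · rintro rfl
    exact ⟨K, hK, hKN, rfl, h.isValley_valley⟩

theorem IsMYPath.exists_isTwoHillsOn (hp : IsMYPath N s p) (h : cPlus N p = {t}) :
    ∃ m K n, IsTwoHillsOn p 0 m K n (N + 1) ∧ pathSeg p K = t := by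
  obtain ⟨K, hK, hKN, rfl, hv⟩ := mem_cPlus_iff.mp (h ▸ Set.mem_singleton t)
  have sole_valley : ∀ k, 0 < k → k < N + 1 → (IsValley p k ↔ k = K) := by
    refine fun k hk hkN => ⟨fun hvk => ?_, fun hkK => hkK ▸ hv⟩
    have hmem : pathSeg p k ∈ cPlus N p := mem_cPlus_iff.mpr ⟨k, hk, hkN, rfl, hvk⟩
    rw [h, Set.mem_singleton_iff] at hmem
    exact (pathSeg_eq_pathSeg_iff.mp hmem).1
  obtain ⟨m, n, hmn⟩ := hp.isStepPathOn.exists_isTwoHillsOn hK hKN sole_valley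
  exact ⟨m, K, n, hmn, rfl⟩

theorem exists_isMYPath_cPlus_eq_singleton (h : t ∈ cSegPlus N s) :
    ∃ p, IsMYPath N s p ∧ cPlus N p = {t} := by
  obtain ⟨q, hq, hqt⟩ := h
  obtain ⟨K, hK, hKN, rfl, hv⟩ := mem_cPlus_iff.mp hqt
  obtain ⟨p, m, n, hp, h0, hpK, hlast⟩ :=
    hq.isStepPathOn.exists_isTwoHillsOn_eq_endpoints_eq_valley hK hKN hv
  refine ⟨p, hq.of_eq_endpoints hp.isStepPathOn h0 hlast, ?_⟩
  rw [hp.cPlus_eq_singleton, pathSeg_eq_pathSeg_iff.mpr ⟨rfl, hpK⟩]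

theorem IsMYPath.eq_of_cPlus_eq_singleton (hp : IsMYPath N s p) (hq : IsMYPath N s q)
    (hpt : cPlus N p = {t}) (hqt : cPlus N q = {t}) (hk : k ≤ N + 1) : p k = q k := by
  obtain ⟨_, K, _, hpK, hpseg⟩ := hp.exists_isTwoHillsOn hpt
  obtain ⟨_, L, _, hqL, hqseg⟩ := hq.exists_isTwoHillsOn hqt
  obtain ⟨rfl, hval⟩ := pathSeg_eq_pathSeg_iff.mp (hpseg.trans hqseg.symm)
  obtain ⟨h0, hlast⟩ := hp.eq_endpoints hq
  exact hpK.eq_of_endpoints_of_valley hqL h0 hval hlast k.zero_le hk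

theorem IsTwoHillsOn.mem_cMinus_iff (h : IsTwoHillsOn p 0 m K n (N + 1)) :
    t ∈ cMinus N p ↔ t = pathSeg p m ∧ 0 < m ∨ t = pathSeg p n ∧ n < N + 1 := by
  have hmK := h.left_summit_lt
  have hKn := h.lt_right_summit
  have hnN := h.right_hill.le_right
  rw [SnakePaper.mem_cMinus_iff]
  constructor
  · rintro ⟨k, hk, hkN, rfl, hpeak⟩
    rcases (h.isPeak_iff hk hkN).mp hpeak with rfl | rfl
    · exact .inl ⟨rfl, hk⟩
    · exact .inr ⟨rfl, hkN⟩
  · rintro (⟨rfl, hm⟩ | ⟨rfl, hn⟩)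
    · exact ⟨m, hm, by omega, rfl, (h.isPeak_iff hm (by omega)).mpr (.inl rfl)⟩
    · exact ⟨n, by omega, hn, rfl, (h.isPeak_iff (by omega) hn).mpr (.inr rfl)⟩

theorem IsMYPath.cMinus_eq_of_cPlus_eq_singleton (hp : IsMYPath N s p) (h : cPlus N p = {t}) :
    cMinus N p = {u | (u = (s.2, t.2) ∧ zlt s.2 t.2) ∨
      (u = (t.1, ((N : ℚ) + 1) + s.1) ∧ zlt s.1 t.1)} := by
  obtain ⟨m, K, n, hK, rfl⟩ := hp.exists_isTwoHillsOn h
  have left_summit : pathSeg p m = (s.2, (pathSeg p K).2) :=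
    Prod.ext (by rw [hK.left_hill.pathSeg_fst_eq, hp.pathSeg_zero]) hK.left_hill.pathSeg_snd_eq
  have right_summit : pathSeg p n = ((pathSeg p K).1, ((N : ℚ) + 1) + s.1) :=
    Prod.ext hK.right_hill.pathSeg_fst_eq (by rw [hK.right_hill.pathSeg_snd_eq, hp.pathSeg_last])
  have left_proper : zlt s.2 (pathSeg p K).2 ↔ 0 < m := by
    have hsub := hK.left_hill.pathSeg_snd_sub_snd
    rw [hp.pathSeg_zero] at hsub
    rw [zlt_iff_pos_of_sub_eq hsub]
    omega
  have right_proper : zlt s.1 (pathSeg p K).1 ↔ n < N + 1 := by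
    have hsub := hK.right_hill.pathSeg_fst_sub_fst
    rw [hp.pathSeg_last] at hsub
    rw [zlt_iff_pos_of_sub_eq hsub]
    omega
  ext u
  rw [Set.mem_ofPred_eq, hK.mem_cMinus_iff, left_summit, right_summit, left_proper, right_proper]

end Segments

/-- Let `s₁ = [i₁,j₁]` be a segment and `s₂ = [i₂,j₂] ∈ c_{s₁}^+`. There is a unique
(on `{0,…,h}`) MY path `p ∈ ℙ_{s₁}` with `c_p^+ = {s₂}`; for this `p`, `c_p^-` consists
of those of `[j₁, j₂]` and `[i₂, h + i₁]` that are proper ( `[j₁,j₂]` iff `j₁ < j₂`,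
`[i₂, h+i₁]` iff `i₁ < i₂`). -/
theorem valley_path (N : ℕ) (hN : 1 ≤ N) (s₁ s₂ : ℚ × ℚ)
    (h₁ : IsSeg N s₁) (h₂ : s₂ ∈ cSegPlus N s₁) :
    (∃ p, IsMYPath N s₁ p ∧ cPlus N p = {s₂}) ∧
    (∀ p p', IsMYPath N s₁ p → IsMYPath N s₁ p' →
      cPlus N p = {s₂} → cPlus N p' = {s₂} → ∀ k, k ≤ N + 1 → p k = p' k) ∧
    (∀ p, IsMYPath N s₁ p → cPlus N p = {s₂} →
      cMinus N p =
        {t : ℚ × ℚ | (t = (s₁.2, s₂.2) ∧ zlt s₁.2 s₂.2) ∨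
          (t = (s₂.1, ((N : ℚ) + 1) + s₁.1) ∧ zlt s₁.1 s₂.1)}) := by
  refine ⟨exists_isMYPath_cPlus_eq_singleton h₂, ?_, ?_⟩
  · intro p p' hp hp' hpt hpt' k hk
    exact hp.eq_of_cPlus_eq_singleton hp' hpt hpt' hk
  · intro p hp hpt
    exact hp.cMinus_eq_of_cPlus_eq_singleton hpt

end SnakePaper
end

section
/- Let 𝐬 = (s₁, …, s_l) be a ladder and let p_m ∈ ℙ_{s_m} be an MY path for s_m, for each 1 ≤ m ≤ l. Then (p₁, …, p_l) ∈ ℙ_𝐬 if and only if for every 1 ≤ m < l and every segment s ∈ c_{p_m}^−, one has p_{m+1}(supp(s)) > p_m(supp(s)) (as integers). -/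
namespace SnakePaper

/-!
For paths `p` and `q`, the gap `q - p` cannot shrink along a descent of `p` and cannot grow along
an ascent of `p`, because `q` moves no faster than `p`. So `q - p` attains its minimum at an
endpoint or at a local maximum of `p`. The ladder condition takes care of the endpoints, and
transitivity reduces the whole tuple to consecutive paths.
-/

section Comparison

variable {G : Type*} [AddCommGroup G] [LinearOrder G] [IsOrderedAddMonoid G]

theorem lt_of_abs_sub_le_abs_sub {a b c d : G} (h : |d - c| ≤ |b - a|) (hba : b ≤ a)
    (hac : a < c) : b < d := by
  have hdrop : c - d ≤ a - b :=
    calc c - d ≤ |d - c| := abs_sub_comm d c ▸ le_abs_self (c - d)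
      _ ≤ |b - a| := h
      _ = a - b := by rw [abs_sub_comm, abs_of_nonneg (sub_nonneg.mpr hba)]
  have hgap : c - a ≤ d - b := by
    rwa [sub_le_sub_iff, add_comm d a, ← sub_le_sub_iff]
  exact sub_pos.mp ((sub_pos.mpr hac).trans_le hgap)

variable {n : ℕ} {p q : ℕ → G}

theorem lt_of_succ_le_of_lt_at_localMax
    (hstep : ∀ k < n, |q (k + 1) - q k| ≤ |p (k + 1) - p k|) (hzero : p 0 < q 0)
    (hmax : ∀ k, k + 1 < n → p k ≤ p (k + 1) → p (k + 2) ≤ p (k + 1) → p (k + 1) < q (k + 1))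
    {k : ℕ} (hk : k < n) (hdesc : p (k + 1) ≤ p k) : p k < q k := by
  induction k with
  | zero => exact hzero
  | succ k ih =>
    have hk' : k < n := k.lt_succ_self.trans hk
    rcases le_total (p k) (p (k + 1)) with hup | hdown
    · exact hmax k hk hup hdesc
    · exact lt_of_abs_sub_le_abs_sub (hstep k hk') hdown (ih hk' hdown)

theorem lt_of_lt_at_localMax
    (hstep : ∀ k < n, |q (k + 1) - q k| ≤ |p (k + 1) - p k|) (hzero : p 0 < q 0)
    (hlast : p n < q n)
    (hmax : ∀ k, k + 1 < n → p k ≤ p (k + 1) → p (k + 2) ≤ p (k + 1) → p (k + 1) < q (k + 1))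
    {k : ℕ} (hk : k ≤ n) : p k < q k := by
  induction hk using Nat.decreasingInduction with
  | self => exact hlast
  | of_succ k hk ih =>
    rcases le_total (p k) (p (k + 1)) with hup | hdown
    · exact lt_of_abs_sub_le_abs_sub
        (by simpa only [abs_sub_comm] using hstep k hk) hup ih
    · exact lt_of_succ_le_of_lt_at_localMax hstep hzero hmax hk hdown

end Comparison

theorem zlt.lt {a b : ℚ} : zlt a b → a < b := by
  rintro ⟨n, hn, hab⟩
  rw [← sub_pos, hab]
  exact_mod_cast hn

theorem supp_pathSeg (p : ℕ → ℤ) (k : ℕ) : supp (pathSeg p k) = k := by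
  simp only [supp, pathSeg]
  ring

section MYPath

variable {N : ℕ} {s t u : ℚ × ℚ} {p q : ℕ → ℤ}

theorem le_of_eq_supp_of_mem_cMinus (hu : u ∈ cMinus N p) {k : ℕ} (hk : (k : ℚ) = supp u) :
    k ≤ N := by
  obtain ⟨j, -, hjN, rfl, -, -⟩ := hu
  rw [supp_pathSeg, Nat.cast_inj] at hk
  exact hk ▸ hjN

theorem IsMYPath.abs_succ_sub (hp : IsMYPath N s p) {k : ℕ} (hk : k < N + 1) :
    |p (k + 1) - p k| = 1 := by
  rcases hp.1 k hk with h | h <;> simp [h]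

theorem IsMYPath.pathSeg_mem_cMinus (hp : IsMYPath N s p) {k : ℕ} (hk : k + 1 < N + 1)
    (hup : p k ≤ p (k + 1)) (hdown : p (k + 2) ≤ p (k + 1)) :
    pathSeg p (k + 1) ∈ cMinus N p := by
  refine ⟨k + 1, k.succ_pos, Nat.lt_succ_iff.mp hk, rfl, ?_, ?_⟩
  · rw [Nat.add_sub_cancel]
    have := hp.1 k (k.lt_succ_self.trans hk)
    lia
  · have := hp.1 (k + 1) hk
    lia

theorem IsMYPath.zero_lt_zero (hp : IsMYPath N s p) (hq : IsMYPath N t q) (h : s.2 < t.2) :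
    p 0 < q 0 := by
  rw [← Int.cast_lt (R := ℚ), hp.2.1, hq.2.1]
  gcongr

theorem IsMYPath.last_lt_last (hp : IsMYPath N s p) (hq : IsMYPath N t q) (h : s.1 < t.1) :
    p (N + 1) < q (N + 1) := by
  rw [← Int.cast_lt (R := ℚ), hp.2.2, hq.2.2]
  gcongr

theorem IsMYPath.forall_lt_iff_forall_mem_cMinus (hp : IsMYPath N s p) (hq : IsMYPath N t q)
    (hfst : s.1 < t.1) (hsnd : s.2 < t.2) :
    (∀ k ≤ N + 1, p k < q k) ↔
      ∀ u ∈ cMinus N p, ∀ k : ℕ, (k : ℚ) = supp u → p k < q k := by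
  refine ⟨fun hlt u hu k hk => hlt k ((le_of_eq_supp_of_mem_cMinus hu hk).trans N.le_succ),
    fun hmax k hk => ?_⟩
  refine lt_of_lt_at_localMax (fun j hj => ?_) (hp.zero_lt_zero hq hsnd)
    (hp.last_lt_last hq hfst) (fun j hj hup hdown => ?_) hk
  · rw [hp.abs_succ_sub hj, hq.abs_succ_sub hj]
  · exact hmax _ (hp.pathSeg_mem_cMinus hj hup hdown) _ (supp_pathSeg p (j + 1)).symm

end MYPath

section Tuple

variable {N l : ℕ} {s : ℕ → ℚ × ℚ} {p : ℕ → ℕ → ℤ}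

theorem isPathTuple_iff_forall_lt_succ (hp : ∀ m, m < l → IsMYPath N (s m) (p m)) :
    IsPathTuple N l s p ↔ ∀ m, m + 1 < l → ∀ k ≤ N + 1, p m k < p (m + 1) k := by
  refine ⟨fun h m hm => h.2 m (m + 1) m.lt_succ_self hm, fun hsucc => ⟨hp, ?_⟩⟩
  intro m n hmn hn k hk
  have hmono : StrictMonoOn (fun i => p i k) (Set.Iio l) :=
    strictMonoOn_of_lt_succ Set.ordConnected_Iio fun i _ _ hi => hsucc i hi k hk
  exact hmono (hmn.trans hn) hn hmn

theorem pathTuple_iff_local_max_general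
    (hfst : ∀ m, m + 1 < l → (s m).1 < (s (m + 1)).1)
    (hsnd : ∀ m, m + 1 < l → (s m).2 < (s (m + 1)).2)
    (hp : ∀ m, m < l → IsMYPath N (s m) (p m)) :
    IsPathTuple N l s p ↔
      ∀ m, m + 1 < l → ∀ t ∈ cMinus N (p m), ∀ k : ℕ, (k : ℚ) = supp t →
        p m k < p (m + 1) k :=
  (isPathTuple_iff_forall_lt_succ hp).trans <| forall₂_congr fun m hm =>
    (hp m (m.lt_succ_self.trans hm)).forall_lt_iff_forall_mem_cMinus (hp (m + 1) hm)
      (hfst m hm) (hsnd m hm)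

end Tuple

/-- For a ladder `𝐬` and MY paths `p_m ∈ ℙ_{s_m}`: `(p₁, …, p_l) ∈ ℙ_𝐬` iff for every
`m < l` and every `t ∈ c_{p_m}^-` one has `p_{m+1}(supp(t)) > p_m(supp(t))`. -/
theorem pathTuple_iff_local_max (N : ℕ) (hN : 1 ≤ N) (l : ℕ) (s : ℕ → ℚ × ℚ)
    (hlad : IsLadder N l s) (p : ℕ → ℕ → ℤ)
    (hp : ∀ m, m < l → IsMYPath N (s m) (p m)) :
    IsPathTuple N l s p ↔
      ∀ m, m + 1 < l → ∀ t ∈ cMinus N (p m), ∀ k : ℕ, (k : ℚ) = supp t →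
        p m k < p (m + 1) k :=
  pathTuple_iff_local_max_general (fun m hm => (hlad.2 m (m + 1) m.lt_succ_self hm).1.lt)
    (fun m hm => (hlad.2 m (m + 1) m.lt_succ_self hm).2.lt) hp

end SnakePaper
end
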